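/- arXiv:1101.2609 — 7 statements merged into one kernel-verified Lean document; each statement's English description precedes it below -/
import Mathlib

section
/- For every integer n ≥ 0 and every x, the q-Euler polynomials satisfy the reflection symmetry (-1)^n · E_{n,q^{-1}}(x) = q · E_{n,q}(1 - x). -/
/-- The exponential generating function `∑ aₙ tⁿ / n!`. -/
noncomputable def egf {K : Type*} [Field K] (a : ℕ → K) : PowerSeries K :=
  PowerSeries.mk fun n => a n / (n.factorial : K)

theorem egf_injective {K : Type*} [Field K] [CharZero K] :
    Function.Injective (egf : (ℕ → K) → PowerSeries K) := by
  intro a b h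
  funext n
  have hn : (n.factorial : K) ≠ 0 := Nat.cast_ne_zero.mpr n.factorial_ne_zero
  have := congrArg (PowerSeries.coeff n) h
  simpa [egf, div_left_inj' hn] using this

/-- Products of exponential generating functions are binomial convolutions. -/
theorem egf_mul {K : Type*} [Field K] [CharZero K] (a b : ℕ → K) :
    egf a * egf b =
      egf fun n => ∑ l ∈ Finset.range (n + 1), (n.choose l : K) * a l * b (n - l) := by
  ext n
  rw [PowerSeries.coeff_mul, Finset.Nat.sum_antidiagonal_eq_sum_range_succ_mk]
  simp only [egf, PowerSeries.coeff_mk, Finset.sum_div]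
  refine Finset.sum_congr rfl fun l hl => ?_
  rw [Nat.cast_choose K (Nat.lt_succ_iff.mp (Finset.mem_range.mp hl))]
  have h (m : ℕ) : (m.factorial : K) ≠ 0 := Nat.cast_ne_zero.mpr m.factorial_ne_zero
  have := h n
  have := h l
  have := h (n - l)
  field_simp

theorem egf_pow_mul_egf_pow {K : Type*} [Field K] [CharZero K] (x y : K) :
    (egf fun n => x ^ n) * (egf fun n => y ^ n) = egf fun n => (x + y) ^ n := by
  rw [egf_mul]
  congr 1
  funext n
  rw [add_pow]
  exact Finset.sum_congr rfl fun l _ => by ring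

theorem egf_zero_pow {K : Type*} [Field K] : (egf fun n => (0 : K) ^ n) = 1 := by
  ext n
  cases n <;> simp [egf, PowerSeries.coeff_one]

theorem C_mul_egf {K : Type*} [Field K] (c : K) (a : ℕ → K) :
    PowerSeries.C c * egf a = egf fun n => c * a n := by
  ext n
  simp [egf, mul_div_assoc]

theorem egf_add {K : Type*} [Field K] (a b : ℕ → K) :
    egf a + egf b = egf fun n => a n + b n := by
  ext n
  simp [egf, add_div]

/-- Multiplying the binomial convolution of `a` with the powers of `x` by the sign `(-1) ^ n`
amounts to twisting `a` by signs and negating `x`. -/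
theorem neg_one_pow_mul_sum_choose {K : Type*} [Field K] (a : ℕ → K) (x : K) (n : ℕ) :
    (-1 : K) ^ n * ∑ l ∈ Finset.range (n + 1), (n.choose l : K) * a l * x ^ (n - l) =
      ∑ l ∈ Finset.range (n + 1), (n.choose l : K) * ((-1) ^ l * a l) * (-x) ^ (n - l) := by
  rw [Finset.mul_sum]
  refine Finset.sum_congr rfl fun l hl => ?_
  obtain ⟨k, rfl⟩ := Nat.exists_eq_add_of_le (Nat.lt_succ_iff.mp (Finset.mem_range.mp hl))
  rw [Nat.add_sub_cancel_left, neg_pow x, pow_add]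
  ring

/-- The generating function identity `(q eᵗ + 1) F(t) = 2` for the `q`-Euler numbers. -/
theorem egf_qEuler {K : Type*} [Field K] [CharZero K] {q : K} (hq1 : q ≠ -1) {E : ℕ → K}
    (hE0 : E 0 = 2 / (q + 1))
    (hE : ∀ n : ℕ, 1 ≤ n →
      q * ∑ l ∈ Finset.range (n + 1), (n.choose l : K) * E l + E n = 0) :
    PowerSeries.C q * (egf E * egf fun n => 1 ^ n) + egf E = PowerSeries.C 2 := by
  rw [← mul_one (PowerSeries.C (2 : K)), ← egf_zero_pow, egf_mul, C_mul_egf, C_mul_egf, egf_add]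
  congr 1
  funext n
  rcases Nat.eq_zero_or_pos n with rfl | hn
  · have : q + 1 ≠ 0 := fun h => hq1 (eq_neg_of_add_eq_zero_left h)
    simp [hE0]
    field_simp
  · simpa [hn.ne'] using hE n hn

/-- The generating function identity `(q e⁻ᵗ + 1) F(-t) = 2` for the `q`-Euler numbers. -/
theorem egf_neg_one_pow_mul_qEuler {K : Type*} [Field K] [CharZero K] {q : K} (hq1 : q ≠ -1)
    {E : ℕ → K} (hE0 : E 0 = 2 / (q + 1))
    (hE : ∀ n : ℕ, 1 ≤ n →
      q * ∑ l ∈ Finset.range (n + 1), (n.choose l : K) * E l + E n = 0) :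
    PowerSeries.C q * ((egf fun n => (-1) ^ n * E n) * egf fun n => (-1) ^ n) +
      (egf fun n => (-1) ^ n * E n) = PowerSeries.C 2 := by
  rw [← mul_one (PowerSeries.C (2 : K)), ← egf_zero_pow, egf_mul, C_mul_egf, C_mul_egf, egf_add]
  congr 1
  funext n
  rw [← neg_one_pow_mul_sum_choose]
  rcases Nat.eq_zero_or_pos n with rfl | hn
  · have : q + 1 ≠ 0 := fun h => hq1 (eq_neg_of_add_eq_zero_left h)
    simp [hE0]
    field_simp
  · simp only [one_pow, mul_one, zero_pow hn.ne', mul_zero]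
    linear_combination (-1) ^ n * hE n hn

/-- Reflection symmetry for q-Euler polynomials:
`(-1)^n · E_{n,q⁻¹}(x) = q · E_{n,q}(1 - x)`.

Here `E : ℕ → K` are the q-Euler numbers `E_{n,q}` defined by
`E_0 = 2/(q+1)` and `q·∑_{l=0}^{n} C(n,l)·E_l + E_n = 0` for `n ≥ 1`,
and `E' : ℕ → K` are the q-Euler numbers for `q⁻¹`.
The q-Euler polynomials are `E_{n,q}(x) = ∑_{l=0}^{n} C(n,l)·E_l·x^{n-l}`. -/
theorem qEuler_reflection {K : Type*} [Field K] [CharZero K]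
    (q : K) (hq0 : q ≠ 0) (hq1 : q ≠ -1)
    (E E' : ℕ → K)
    (hE0 : E 0 = 2 / (q + 1))
    (hE : ∀ n : ℕ, 1 ≤ n →
      q * ∑ l ∈ Finset.range (n + 1), (n.choose l : K) * E l + E n = 0)
    (hE'0 : E' 0 = 2 / (q⁻¹ + 1))
    (hE' : ∀ n : ℕ, 1 ≤ n →
      q⁻¹ * ∑ l ∈ Finset.range (n + 1), (n.choose l : K) * E' l + E' n = 0) :
    ∀ (n : ℕ) (x : K),
      (-1 : K) ^ n * ∑ l ∈ Finset.range (n + 1), (n.choose l : K) * E' l * x ^ (n - l)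
        = q * ∑ l ∈ Finset.range (n + 1), (n.choose l : K) * E l * (1 - x) ^ (n - l) := by
  have hq1' : q⁻¹ ≠ -1 := fun h => hq1 (by rw [← inv_inv q, h]; norm_num)
  have hF := egf_qEuler hq1 hE0 hE
  have hG := egf_neg_one_pow_mul_qEuler hq1' hE'0 hE'
  have hexp : (egf fun n => (-1 : K) ^ n) * (egf fun n => 1 ^ n) = 1 := by
    rw [egf_pow_mul_egf_pow, neg_add_cancel, egf_zero_pow]
  have hC : PowerSeries.C q * PowerSeries.C q⁻¹ = 1 := by
    rw [← map_mul, mul_inv_cancel₀ hq0, map_one]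
  have hne : PowerSeries.C q * (egf fun n => (1 : K) ^ n) + 1 ≠ 0 := by
    intro h
    have h2 : PowerSeries.C (2 : K) = 0 := by linear_combination egf E * h - hF
    exact two_ne_zero ((map_eq_zero_iff _ PowerSeries.C_injective).mp h2)
  have hGF : (egf fun n => (-1) ^ n * E' n) =
      PowerSeries.C q * (egf E * egf fun n => 1 ^ n) := by
    refine mul_right_cancel₀ hne ?_
    linear_combination (PowerSeries.C q * egf fun n => (1 : K) ^ n) * (hG - hF)
      - (egf fun n => (-1) ^ n * E' n) * hC
      - PowerSeries.C q * PowerSeries.C q⁻¹ * (egf fun n => (-1) ^ n * E' n) * hexp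
  intro n x
  have hx : (egf fun n => (-1) ^ n * E' n) * (egf fun n => (-x) ^ n) =
      PowerSeries.C q * (egf E * egf fun n => (1 - x) ^ n) := by
    rw [hGF, sub_eq_add_neg, ← egf_pow_mul_egf_pow]
    ring
  rw [egf_mul, egf_mul, C_mul_egf] at hx
  rw [neg_one_pow_mul_sum_choose]
  exact congrFun (egf_injective hx) n
end

section
/- For every integer n ≥ 1, the q-Euler polynomials satisfy q · E_{n,q}(2) = 2 + q^{-1} · E_{n,q}. -/
open Polynomial in
/-- The umbral functional sends `(X + a) ^ n` to the Appell polynomial of `E` evaluated at `a`. -/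
lemma constr_basisMonomials_X_add_C_pow {R : Type*} [CommRing R] (E : ℕ → R) (a : R) (n : ℕ) :
    (basisMonomials R).constr R E ((X + C a) ^ n) =
      ∑ l ∈ Finset.range (n + 1), (n.choose l : R) * E l * a ^ (n - l) := by
  rw [add_pow, map_sum]
  refine Finset.sum_congr rfl fun l _ => ?_
  have h : (X : R[X]) ^ l * C a ^ (n - l) * (n.choose l : R[X]) =
      ((n.choose l : R) * a ^ (n - l)) • basisMonomials R l := by
    simp only [coe_basisMonomials]
    rw [← X_pow_eq_monomial, smul_eq_C_mul, C_mul, C_pow, map_natCast]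
    ring
  rw [h, map_smul, Module.Basis.constr_basis, smul_eq_mul]
  ring

open Polynomial in
/-- Binomial sums compose: the Appell polynomial of `E` at `2` is the twice-iterated
binomial transform of `E`. -/
lemma sum_choose_mul_two_pow {R : Type*} [CommRing R] (E : ℕ → R) (n : ℕ) :
    ∑ l ∈ Finset.range (n + 1), (n.choose l : R) * E l * 2 ^ (n - l) =
      ∑ k ∈ Finset.range (n + 1), (n.choose k : R) *
        ∑ l ∈ Finset.range (k + 1), (k.choose l : R) * E l := by
  have h : (X + C (2 : R)) ^ n =
      ∑ k ∈ Finset.range (n + 1), (n.choose k : R) • (X + C (1 : R)) ^ k := by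
    rw [show X + C (2 : R) = (X + C 1) + 1 by rw [add_assoc, ← C_1, ← C_add, one_add_one_eq_two],
      add_pow]
    refine Finset.sum_congr rfl fun k _ => ?_
    rw [one_pow, mul_one, smul_eq_C_mul, map_natCast, mul_comm]
  rw [← constr_basisMonomials_X_add_C_pow, h, map_sum]
  refine Finset.sum_congr rfl fun k _ => ?_
  simp only [map_smul, constr_basisMonomials_X_add_C_pow, one_pow, mul_one, smul_eq_mul]

/-- `q · E_{n,q}(2) = 2 + q⁻¹ · E_{n,q}` for `n ≥ 1`, where
`E : ℕ → K` are the q-Euler numbers `E_{n,q}` defined by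
`E_0 = 2/(q+1)` and `q·∑_{l=0}^{n} C(n,l)·E_l + E_n = 0` for `n ≥ 1`,
and `E_{n,q}(x) = ∑_{l=0}^{n} C(n,l)·E_l·x^{n-l}`. -/
theorem qEuler_at_two {K : Type*} [Field K] [CharZero K]
    (q : K) (hq0 : q ≠ 0) (hq1 : q ≠ -1)
    (E : ℕ → K)
    (hE0 : E 0 = 2 / (q + 1))
    (hE : ∀ n : ℕ, 1 ≤ n →
      q * ∑ l ∈ Finset.range (n + 1), (n.choose l : K) * E l + E n = 0) :
    ∀ n : ℕ, 1 ≤ n →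
      q * ∑ l ∈ Finset.range (n + 1), (n.choose l : K) * E l * (2 : K) ^ (n - l)
        = 2 + q⁻¹ * E n := by
  intro n hn
  have hq : q + 1 ≠ 0 := fun h => hq1 (eq_neg_of_add_eq_zero_left h)
  have hk : ∀ k, q * ∑ l ∈ Finset.range (k + 1), (k.choose l : K) * E l =
      (if k = 0 then 2 else 0) - E k := by
    intro k
    rcases Nat.eq_zero_or_pos k with rfl | hk
    · simp only [zero_add, Finset.sum_range_one, Nat.choose_self, Nat.cast_one, one_mul, if_true,
        hE0]
      field_simp
      ring
    · rw [if_neg hk.ne', zero_sub]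
      exact eq_neg_of_add_eq_zero_left (hE k hk)
  have hsum : ∑ k ∈ Finset.range (n + 1), (n.choose k : K) * E k = -(q⁻¹ * E n) := by
    have := hk n
    rw [if_neg (by omega)] at this
    rw [← inv_mul_cancel_left₀ hq0 (∑ k ∈ _, _), this]
    ring
  rw [sum_choose_mul_two_pow, Finset.mul_sum]
  simp only [mul_left_comm q, hk, mul_sub, Finset.sum_sub_distrib, hsum]
  simp
end

section
/- For every integer n ≥ 1, one has (-1)^n · E_{n,q^{-1}}(-1) = 2 + q^{-1} · E_{n,q}. (This is the content of Theorem 3 of the paper, expressing the p-adic integral ∫_{ℤ_p} q^{-x}(1-x)^n dμ_{-1}(x) in terms of q-Euler numbers via Witt's formula.) -/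
open PowerSeries in
/-- Multiplying an exponential generating function by `exp` takes the binomial transform. -/
theorem coeff_egf_mul_exp {K : Type*} [Field K] [CharZero K] (a : ℕ → K) (n : ℕ) :
    coeff n (mk (fun l => a l / (l.factorial : K)) * exp K) =
      (∑ l ∈ Finset.range (n + 1), (n.choose l : K) * a l) / (n.factorial : K) := by
  rw [coeff_mul, Finset.Nat.sum_antidiagonal_eq_sum_range_succ_mk, Finset.sum_div]
  refine Finset.sum_congr rfl fun l hl => ?_
  have hln : l ≤ n := Nat.lt_succ_iff.mp (Finset.mem_range.mp hl)
  have hn := Nat.cast_ne_zero (R := K) |>.mpr n.factorial_ne_zero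
  simp only [coeff_mk, coeff_exp, map_div₀, map_one, map_natCast, Nat.cast_choose K hln]
  field_simp

open PowerSeries in
/-- The exponential generating function of the `q`-Euler numbers is `2 / (q * exp + 1)`. -/
theorem qEuler_egf_mul {K : Type*} [Field K] [CharZero K] (q : K) (hq1 : q ≠ -1) (E : ℕ → K)
    (hE0 : E 0 = 2 / (q + 1))
    (hE : ∀ n : ℕ, 1 ≤ n →
      q * ∑ l ∈ Finset.range (n + 1), (n.choose l : K) * E l + E n = 0) :
    mk (fun l => E l / (l.factorial : K)) * (C q * exp K + 1) = C 2 := by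
  ext n
  rw [mul_add, mul_one, mul_left_comm, map_add, coeff_C_mul, coeff_egf_mul_exp, coeff_mk,
    coeff_C]
  rcases Nat.eq_zero_or_pos n with rfl | hn
  · have hq : q + 1 ≠ 0 := fun h => hq1 (eq_neg_of_add_eq_zero_left h)
    simp [hE0]
    field_simp
  · rw [if_neg hn.ne', ← mul_div_assoc, ← add_div, hE n hn, zero_div]

/-- `(-1)^n · E_{n,q⁻¹}(-1) = 2 + q⁻¹ · E_{n,q}` for `n ≥ 1` (Theorem 3 of the paper).
`E : ℕ → K` are the q-Euler numbers for `q`, `E' : ℕ → K` those for `q⁻¹`,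
and `E_{n,q}(x) = ∑_{l=0}^{n} C(n,l)·E_l·x^{n-l}`. -/
theorem qEuler_integral_identity {K : Type*} [Field K] [CharZero K]
    (q : K) (hq0 : q ≠ 0) (hq1 : q ≠ -1)
    (E E' : ℕ → K)
    (hE0 : E 0 = 2 / (q + 1))
    (hE : ∀ n : ℕ, 1 ≤ n →
      q * ∑ l ∈ Finset.range (n + 1), (n.choose l : K) * E l + E n = 0)
    (hE'0 : E' 0 = 2 / (q⁻¹ + 1))
    (hE' : ∀ n : ℕ, 1 ≤ n →
      q⁻¹ * ∑ l ∈ Finset.range (n + 1), (n.choose l : K) * E' l + E' n = 0) :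
    ∀ n : ℕ, 1 ≤ n →
      (-1 : K) ^ n *
        ∑ l ∈ Finset.range (n + 1), (n.choose l : K) * E' l * (-1 : K) ^ (n - l)
        = 2 + q⁻¹ * E n := by
  intro n hn
  have hqi : q⁻¹ ≠ -1 := fun h => hq1 (by rw [← inv_inv q, h, inv_neg, inv_one])
  set F := PowerSeries.mk (fun l => E l / (l.factorial : K))
  set G := PowerSeries.mk (fun l => (-1) ^ l * E' l / (l.factorial : K)) with hGdef
  set e := PowerSeries.exp K
  have hF : F * (PowerSeries.C q * e + 1) = PowerSeries.C 2 := qEuler_egf_mul q hq1 E hE0 hE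
  have hG : G * (PowerSeries.C q⁻¹ * PowerSeries.evalNegHom e + 1) = PowerSeries.C 2 := by
    have hG' : PowerSeries.evalNegHom (PowerSeries.mk fun l => E' l / (l.factorial : K)) = G := by
      ext l
      simp [hGdef, PowerSeries.evalNegHom, PowerSeries.coeff_rescale, mul_div_assoc]
    have hC (c : K) : PowerSeries.evalNegHom (PowerSeries.C c) = PowerSeries.C c := by
      ext l
      rcases eq_or_ne l 0 with rfl | hl <;>
        simp [PowerSeries.evalNegHom, PowerSeries.coeff_rescale, PowerSeries.coeff_C, *]
    have h := congrArg PowerSeries.evalNegHom (qEuler_egf_mul q⁻¹ hqi E' hE'0 hE')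
    rwa [map_mul, map_add, map_mul, map_one, hC, hC, hG'] at h
  have he : e * PowerSeries.evalNegHom e = 1 := PowerSeries.exp_mul_exp_neg_eq_one
  have hcc : (PowerSeries.C q : PowerSeries K) * PowerSeries.C q⁻¹ = 1 := by
    rw [← map_mul, mul_inv_cancel₀ hq0, map_one]
  have hne : PowerSeries.C q⁻¹ + e ≠ 0 := by
    intro h
    have h0 := congrArg PowerSeries.constantCoeff h
    simp only [map_add, PowerSeries.constantCoeff_C, PowerSeries.constantCoeff_exp, map_zero, e]
      at h0
    exact hqi (eq_neg_of_add_eq_zero_left h0)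
  have key : G * e = PowerSeries.C 2 * e + PowerSeries.C q⁻¹ * F
      - PowerSeries.C 2 * PowerSeries.C q⁻¹ := by
    refine mul_right_cancel₀ hne ?_
    linear_combination e ^ 2 * hG - e * G * PowerSeries.C q⁻¹ * he
      - (PowerSeries.C q⁻¹) ^ 2 * hF + PowerSeries.C q⁻¹ * F * e * hcc
  have hcoeff := congrArg (PowerSeries.coeff n) key
  rw [coeff_egf_mul_exp, ← map_mul, map_sub, map_add, PowerSeries.coeff_C_mul,
    PowerSeries.coeff_C_mul, PowerSeries.coeff_C, if_neg (by omega), PowerSeries.coeff_mk,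
    PowerSeries.coeff_exp] at hcoeff
  have hfac : (n.factorial : K) ≠ 0 := Nat.cast_ne_zero.mpr n.factorial_ne_zero
  simp only [map_div₀, map_one, map_natCast] at hcoeff
  field_simp at hcoeff
  rw [Finset.mul_sum]
  trans ∑ l ∈ Finset.range (n + 1), (n.choose l : K) * ((-1) ^ l * E' l)
  · refine Finset.sum_congr rfl fun l hl => ?_
    obtain ⟨k, rfl⟩ := Nat.exists_eq_add_of_le (Nat.lt_succ_iff.mp (Finset.mem_range.mp hl))
    have hk : (-1 : K) ^ k * (-1) ^ k = 1 := by rw [← mul_pow]; simp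
    rw [Nat.add_sub_cancel_left, pow_add]
    linear_combination ((l + k).choose l : K) * E' l * (-1) ^ l * hk
  · field_simp
    linear_combination hcoeff
end

section
/- For every integer n ≥ 1, one has ∑_{j=0}^{n} C(n,j) · (-1)^j · E_{j,q^{-1}} = 2 + q^{-1} · E_{n,q}. (This is the k = 0 case of Corollary 5 of the paper, obtained by comparing two p-adic integral evaluations of the Bernstein polynomial B_{0,n}(x) weighted by q^x.) -/
open PowerSeries in
/-- Multiplying an exponential generating function by `exp` is the binomial transform. -/
theorem coeff_exp_mul_mk_div_factorial {K : Type*} [Field K] [CharZero K] (a : ℕ → K) (n : ℕ) :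
    coeff n (exp K * mk fun k => a k / (k.factorial : K)) =
      (∑ l ∈ Finset.range (n + 1), (n.choose l : K) * a l) / (n.factorial : K) := by
  rw [mul_comm, coeff_mul, Finset.Nat.sum_antidiagonal_eq_sum_range_succ_mk, Finset.sum_div]
  refine Finset.sum_congr rfl fun l hl => ?_
  have hln : l ≤ n := Nat.lt_succ_iff.mp (Finset.mem_range.mp hl)
  have hn : (n.factorial : K) ≠ 0 := Nat.cast_ne_zero.mpr n.factorial_ne_zero
  have hl' : (l.factorial : K) ≠ 0 := Nat.cast_ne_zero.mpr l.factorial_ne_zero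
  have hd : ((n - l).factorial : K) ≠ 0 := Nat.cast_ne_zero.mpr (n - l).factorial_ne_zero
  simp only [coeff_mk, coeff_exp, map_div₀, map_one, map_natCast, Nat.cast_choose K hln]
  field_simp

open PowerSeries in
/-- The exponential generating function of the `q`-Euler numbers is `2 / (q * exp + 1)`. -/
theorem qEuler_egf {K : Type*} [Field K] [CharZero K] (q : K) (hq : q + 1 ≠ 0) (E : ℕ → K)
    (hE0 : E 0 = 2 / (q + 1))
    (hE : ∀ n : ℕ, 1 ≤ n →
      q * ∑ l ∈ Finset.range (n + 1), (n.choose l : K) * E l + E n = 0) :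
    (C q * exp K + 1) * (mk fun k => E k / (k.factorial : K)) = C 2 := by
  ext n
  rw [add_mul, one_mul, mul_assoc, map_add, coeff_C_mul, coeff_exp_mul_mk_div_factorial, coeff_mk,
    coeff_C, ← mul_div_assoc, ← add_div]
  rcases Nat.eq_zero_or_pos n with rfl | hn
  · simp [hE0]
    field_simp
  · rw [hE n hn, zero_div, if_neg hn.ne']

open PowerSeries in
/-- `∑_{j=0}^{n} C(n,j) · (-1)^j · E_{j,q⁻¹} = 2 + q⁻¹ · E_{n,q}` for `n ≥ 1`
(k = 0 case of Corollary 5). `E : ℕ → K` are the q-Euler numbers for `q`,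
`E' : ℕ → K` those for `q⁻¹`. -/
theorem qEuler_bernstein_k0 {K : Type*} [Field K] [CharZero K]
    (q : K) (hq0 : q ≠ 0) (hq1 : q ≠ -1)
    (E E' : ℕ → K)
    (hE0 : E 0 = 2 / (q + 1))
    (hE : ∀ n : ℕ, 1 ≤ n →
      q * ∑ l ∈ Finset.range (n + 1), (n.choose l : K) * E l + E n = 0)
    (hE'0 : E' 0 = 2 / (q⁻¹ + 1))
    (hE' : ∀ n : ℕ, 1 ≤ n →
      q⁻¹ * ∑ l ∈ Finset.range (n + 1), (n.choose l : K) * E' l + E' n = 0) :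
    ∀ n : ℕ, 1 ≤ n →
      ∑ j ∈ Finset.range (n + 1), (n.choose j : K) * (-1 : K) ^ j * E' j
        = 2 + q⁻¹ * E n := by
  have hq : q + 1 ≠ 0 := fun h => hq1 (eq_neg_of_add_eq_zero_left h)
  have hq' : q⁻¹ + 1 ≠ 0 := by
    intro h
    apply hq
    field_simp at h
    linear_combination h
  have hF := qEuler_egf q hq E hE0 hE
  have hF' := congrArg evalNegHom (qEuler_egf q⁻¹ hq' E' hE'0 hE')
  have hG : evalNegHom (mk fun k => E' k / (k.factorial : K)) =
      mk fun k => ((-1) ^ k * E' k) / (k.factorial : K) := by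
    ext k
    simp [evalNegHom, coeff_rescale, mul_div_assoc]
  have hC (a : K) : evalNegHom (C a) = C a := by
    ext k
    rcases Nat.eq_zero_or_pos k with rfl | hk
    · simp [evalNegHom, coeff_rescale]
    · simp [evalNegHom, coeff_rescale, coeff_C, hk.ne']
  rw [map_mul, map_add, map_mul, map_one, hC, hC, hG] at hF'
  have hexp := exp_mul_exp_neg_eq_one (A := K)
  have hCq : (C q : K⟦X⟧) * C q⁻¹ = 1 := by rw [← map_mul, mul_inv_cancel₀ hq0, map_one]
  have hne : (C q * exp K + 1 : K⟦X⟧) ≠ 0 := by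
    intro h
    apply hq
    simpa using congrArg constantCoeff h
  have key : exp K * (mk fun k => ((-1) ^ k * E' k) / (k.factorial : K)) =
      C 2 * exp K + C q⁻¹ * (mk fun k => E k / (k.factorial : K)) - C 2 * C q⁻¹ := by
    apply mul_left_cancel₀ hne
    set G := (mk fun k => ((-1) ^ k * E' k) / (k.factorial : K) : K⟦X⟧)
    linear_combination C q * exp K ^ 2 * hF' - C q⁻¹ * hF -
      exp K * G * C q * C q⁻¹ * hexp - (exp K * G - C 2 * exp K) * hCq
  intro n hn
  have h := congrArg (coeff n) key
  have hfac : (n.factorial : K) ≠ 0 := Nat.cast_ne_zero.mpr n.factorial_ne_zero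
  rw [coeff_exp_mul_mk_div_factorial, ← map_mul C, map_sub, map_add, coeff_C_mul, coeff_C_mul,
    coeff_mk, coeff_exp, coeff_C, if_neg (Nat.one_le_iff_ne_zero.mp hn)] at h
  simp only [map_div₀, map_one, map_natCast, sub_zero] at h
  field_simp at h
  field_simp
  linear_combination h
end

section
/- For all integers n, k with 0 < k < n, one has ∑_{j=0}^{n-k} C(n-k,j) · (-1)^j · E_{k+j,q^{-1}} = q^{-1} · ∑_{j=0}^{k} C(k,j) · (-1)^{k-j} · E_{n-j,q}. (Corollary 5 of the paper, k > 0 case, obtained by comparing two p-adic integral evaluations of the Bernstein polynomial B_{k,n}(x) weighted by q^x.) -/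
open Polynomial

/-- The linear functional on `K[X]` sending `X ^ n` to `E n`. -/
noncomputable def umbral {K : Type*} [Field K] (E : ℕ → K) : K[X] →ₗ[K] K :=
  Polynomial.lsum fun n => E n • LinearMap.id

theorem umbral_monomial {K : Type*} [Field K] (E : ℕ → K) (n : ℕ) (a : K) :
    umbral E (monomial n a) = a * E n := by
  simp [umbral, Polynomial.lsum_apply, Polynomial.sum_monomial_index, mul_comm]

theorem umbral_X_pow {K : Type*} [Field K] (E : ℕ → K) (n : ℕ) :
    umbral E (X ^ n) = E n := by
  rw [← monomial_one_right_eq_X_pow, umbral_monomial, one_mul]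

theorem umbral_C_mul {K : Type*} [Field K] (E : ℕ → K) (a : K) (p : K[X]) :
    umbral E (C a * p) = a * umbral E p := by
  rw [← smul_eq_C_mul, map_smul, smul_eq_mul]

theorem umbral_X_add_one_pow {K : Type*} [Field K] (E : ℕ → K) (n : ℕ) :
    umbral E ((X + 1) ^ n) = ∑ l ∈ Finset.range (n + 1), (n.choose l : K) * E l := by
  rw [add_pow, map_sum]
  refine Finset.sum_congr rfl fun l _ => ?_
  rw [one_pow, mul_one, mul_comm, ← C_eq_natCast, umbral_C_mul, umbral_X_pow]

/-- The q-Euler recurrence in functional form. -/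
theorem umbral_comp_X_add_one {K : Type*} [Field K] {q : K} (hq1 : q ≠ -1) {E : ℕ → K}
    (hE0 : E 0 = 2 / (q + 1))
    (hE : ∀ n : ℕ, 1 ≤ n →
      q * ∑ l ∈ Finset.range (n + 1), (n.choose l : K) * E l + E n = 0) (p : K[X]) :
    q * umbral E (p.comp (X + 1)) + umbral E p = 2 * p.eval 0 := by
  have hq : q + 1 ≠ 0 := fun h => hq1 (eq_neg_of_add_eq_zero_left h)
  induction p using Polynomial.induction_on' with
  | add p r hp hr =>
    rw [add_comp, map_add, map_add, eval_add]
    linear_combination hp + hr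
  | monomial n a =>
    rw [monomial_comp, umbral_C_mul, umbral_X_add_one_pow, umbral_monomial, eval_monomial]
    rcases n.eq_zero_or_pos with rfl | hn
    · simp only [zero_add, Finset.sum_range_one, Nat.choose_self, Nat.cast_one, hE0, pow_zero]
      field_simp
    · rw [zero_pow hn.ne']
      linear_combination a * hE n hn

/-- A functional that is `-q⁻¹`-invariant under the unit shift vanishes when `q ≠ -1`. -/
theorem eq_zero_of_comp_X_add_one {K : Type*} [Field K] {q : K} (hq1 : q ≠ -1)
    (D : K[X] →ₗ[K] K) (hD : ∀ p : K[X], q * D (p.comp (X + 1)) + D p = 0) : D = 0 := by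
  have hq : q + 1 ≠ 0 := fun h => hq1 (eq_neg_of_add_eq_zero_left h)
  have hX : ∀ n : ℕ, D (X ^ n) = 0 := by
    intro n
    induction n using Nat.strong_induction_on with
    | _ n ih =>
      have h := hD (X ^ n)
      rw [X_pow_comp, add_pow, map_sum, Finset.sum_range_succ, Finset.sum_eq_zero] at h
      · simp only [Nat.sub_self, pow_zero, mul_one, Nat.choose_self, Nat.cast_one, zero_add] at h
        exact (mul_eq_zero.mp (by linear_combination h : (q + 1) * D (X ^ n) = 0)).resolve_left hq
      · intro l hl
        rw [one_pow, mul_one, mul_comm, ← C_eq_natCast, ← smul_eq_C_mul, map_smul,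
          ih l (Finset.mem_range.mp hl), smul_zero]
  ext n
  simpa [monomial_one_right_eq_X_pow] using hX n

/-- The reflection formula relating the q-Euler functionals for `q⁻¹` and `q`. -/
theorem umbral_comp_one_sub_X {K : Type*} [Field K] {q : K} (hq0 : q ≠ 0) (hq1 : q ≠ -1)
    {E E' : ℕ → K}
    (hL : ∀ p : K[X], q * umbral E (p.comp (X + 1)) + umbral E p = 2 * p.eval 0)
    (hL' : ∀ p : K[X], q⁻¹ * umbral E' (p.comp (X + 1)) + umbral E' p = 2 * p.eval 0)
    (p : K[X]) :
    umbral E' (p.comp (1 - X)) =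
      q⁻¹ * umbral E p + 2 * p.eval 1 - 2 * q⁻¹ * p.eval 0 := by
  let D : K[X] →ₗ[K] K :=
    umbral E' ∘ₗ (aeval (1 - X : K[X])).toLinearMap - q⁻¹ • umbral E
      - (2 : K) • leval 1 + (2 * q⁻¹) • leval 0
  have hDp (p : K[X]) : D p = umbral E' (p.comp (1 - X)) - q⁻¹ * umbral E p
      - 2 * p.eval 1 + 2 * q⁻¹ * p.eval 0 := by
    simp [D, comp_eq_aeval]
  have hD : D = 0 := by
    refine eq_zero_of_comp_X_add_one hq1 D fun p => ?_
    have h := hL p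
    have h' := hL' ((p.comp (X + 1)).comp (1 - X))
    have hcomp : ((p.comp (X + 1)).comp (1 - X)).comp (X + 1) = p.comp (1 - X) := by
      simp only [comp_assoc]
      congr 1
      simp [sub_eq_neg_add]
    rw [hcomp] at h'
    simp only [eval_comp, eval_add, eval_sub, eval_X, eval_one, sub_zero] at h'
    rw [hDp, hDp]
    simp only [eval_comp, eval_add, eval_X, eval_one, zero_add]
    have hqq : q * q⁻¹ = 1 := mul_inv_cancel₀ hq0
    linear_combination q * h' - q⁻¹ * h + (2 * p.eval 1 - umbral E' (p.comp (1 - X))) * hqq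
  have h := hDp p
  rw [hD, LinearMap.zero_apply] at h
  linear_combination -h

theorem umbral_X_pow_mul_one_sub_X_pow {K : Type*} [Field K] (E : ℕ → K) (k m : ℕ) :
    umbral E (X ^ k * (1 - X) ^ m) =
      ∑ j ∈ Finset.range (m + 1), (m.choose j : K) * (-1 : K) ^ j * E (k + j) := by
  rw [sub_eq_neg_add, add_pow, Finset.mul_sum, map_sum]
  refine Finset.sum_congr rfl fun j _ => ?_
  rw [← umbral_X_pow E (k + j), ← umbral_C_mul]
  congr 1
  simp only [C_mul, C_pow, C_neg, C_1, C_eq_natCast, one_pow, neg_pow (X : K[X]) j]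
  ring

/-- Corollary 5 (k > 0 case): for `0 < k < n`,
`∑_{j=0}^{n-k} C(n-k,j)·(-1)^j·E_{k+j,q⁻¹} = q⁻¹·∑_{j=0}^{k} C(k,j)·(-1)^{k-j}·E_{n-j,q}`.
`E : ℕ → K` are the q-Euler numbers for `q`, `E' : ℕ → K` those for `q⁻¹`. -/
theorem qEuler_bernstein_kpos {K : Type*} [Field K] [CharZero K]
    (q : K) (hq0 : q ≠ 0) (hq1 : q ≠ -1)
    (E E' : ℕ → K)
    (hE0 : E 0 = 2 / (q + 1))
    (hE : ∀ n : ℕ, 1 ≤ n →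
      q * ∑ l ∈ Finset.range (n + 1), (n.choose l : K) * E l + E n = 0)
    (hE'0 : E' 0 = 2 / (q⁻¹ + 1))
    (hE' : ∀ n : ℕ, 1 ≤ n →
      q⁻¹ * ∑ l ∈ Finset.range (n + 1), (n.choose l : K) * E' l + E' n = 0) :
    ∀ n k : ℕ, 0 < k → k < n →
      ∑ j ∈ Finset.range (n - k + 1), ((n - k).choose j : K) * (-1 : K) ^ j * E' (k + j)
        = q⁻¹ * ∑ j ∈ Finset.range (k + 1),
            (k.choose j : K) * (-1 : K) ^ (k - j) * E (n - j) := by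
  intro n k hk hkn
  have hq1' : q⁻¹ ≠ -1 := fun h => hq1 (by rw [← inv_inv q, h, inv_neg, inv_one])
  have h := umbral_comp_one_sub_X hq0 hq1 (umbral_comp_X_add_one hq1 hE0 hE)
    (umbral_comp_X_add_one hq1' hE'0 hE') (X ^ (n - k) * (1 - X) ^ k)
  have hcomp : (X ^ (n - k) * (1 - X) ^ k : K[X]).comp (1 - X) = X ^ k * (1 - X) ^ (n - k) := by
    simp [mul_comm]
  rw [hcomp, umbral_X_pow_mul_one_sub_X_pow, umbral_X_pow_mul_one_sub_X_pow] at h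
  simp only [eval_mul, eval_pow, eval_sub, eval_X, eval_one, sub_self, zero_pow hk.ne',
    zero_pow (Nat.sub_pos_of_lt hkn).ne', mul_zero, zero_mul, add_zero, sub_zero] at h
  rw [h, ← Finset.sum_range_reflect]
  congr 1
  refine Finset.sum_congr rfl fun j hj => ?_
  have hjk : j ≤ k := Nat.lt_succ_iff.mp (Finset.mem_range.mp hj)
  rw [show k + 1 - 1 - j = k - j by omega, Nat.choose_symm hjk,
    show n - k + (k - j) = n - j by omega]
end

section
/- For all integers m, n ≥ 0 with m + n > 0, one has ∑_{j=0}^{n+m} C(n+m, j) · (-1)^j · E_{j, q^{-1}} = 2 + q^{-1} · E_{n+m, q}. (Corollary 7 of the paper, k = 0 case.) -/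
/-- The exponential generating function of the sequence `a`. -/
noncomputable def expGenFun {K : Type*} [Field K] (a : ℕ → K) : PowerSeries K :=
  PowerSeries.mk fun n => a n / (n.factorial : K)

section expGenFun

open PowerSeries

variable {K : Type*} [Field K]

theorem rescale_C_eq (c a : K) : rescale c (C a) = C a := by
  ext n
  rcases n.eq_zero_or_pos with rfl | hn
  · simp
  · simp [coeff_rescale, coeff_C, hn.ne']

theorem rescale_expGenFun (c : K) (a : ℕ → K) :
    rescale c (expGenFun a) = expGenFun fun n => c ^ n * a n := by
  ext n
  simp [expGenFun, coeff_rescale, mul_div_assoc]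

variable [CharZero K]

/-- Multiplication by `exp` is the binomial transform. -/
theorem exp_mul_expGenFun (a : ℕ → K) :
    exp K * expGenFun a =
      expGenFun fun n => ∑ l ∈ Finset.range (n + 1), (n.choose l : K) * a l := by
  ext n
  rw [mul_comm, coeff_mul, Finset.Nat.sum_antidiagonal_eq_sum_range_succ_mk]
  simp only [expGenFun, coeff_mk, coeff_exp, Finset.sum_div]
  refine Finset.sum_congr rfl fun l hl => ?_
  have hn : (n.factorial : K) ≠ 0 := mod_cast n.factorial_ne_zero
  rw [Nat.cast_choose K (Finset.mem_range_succ_iff.mp hl)]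
  simp only [one_div, map_inv₀, map_natCast]
  field_simp

/-- The generating function of the q-Euler numbers is `2 / (q * exp + 1)`. -/
theorem expGenFun_qEuler {q : K} (hq : q + 1 ≠ 0) {E : ℕ → K} (hE0 : E 0 = 2 / (q + 1))
    (hE : ∀ n : ℕ, 1 ≤ n →
      q * ∑ l ∈ Finset.range (n + 1), (n.choose l : K) * E l + E n = 0) :
    (C q * exp K + 1) * expGenFun E = C 2 := by
  rw [add_mul, mul_assoc, exp_mul_expGenFun, one_mul]
  ext n
  rw [map_add, coeff_C_mul, coeff_C]
  simp only [expGenFun, coeff_mk]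
  rw [← mul_div_assoc, ← add_div]
  rcases n.eq_zero_or_pos with rfl | hn
  · simp only [zero_add, Finset.sum_range_one, Nat.choose_self, Nat.cast_one, one_mul,
      Nat.factorial_zero, div_one, if_true, hE0]
    field_simp
  · rw [hE n hn, zero_div, if_neg hn.ne']

end expGenFun

/-- Corollary 7 (k = 0 case): for `m + n > 0`,
`∑_{j=0}^{n+m} C(n+m,j)·(-1)^j·E_{j,q⁻¹} = 2 + q⁻¹·E_{n+m,q}`.
`E : ℕ → K` are the q-Euler numbers for `q`, `E' : ℕ → K` those for `q⁻¹`. -/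
theorem qEuler_bernstein_product_k0 {K : Type*} [Field K] [CharZero K]
    (q : K) (hq0 : q ≠ 0) (hq1 : q ≠ -1)
    (E E' : ℕ → K)
    (hE0 : E 0 = 2 / (q + 1))
    (hE : ∀ n : ℕ, 1 ≤ n →
      q * ∑ l ∈ Finset.range (n + 1), (n.choose l : K) * E l + E n = 0)
    (hE'0 : E' 0 = 2 / (q⁻¹ + 1))
    (hE' : ∀ n : ℕ, 1 ≤ n →
      q⁻¹ * ∑ l ∈ Finset.range (n + 1), (n.choose l : K) * E' l + E' n = 0) :
    ∀ m n : ℕ, 0 < m + n →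
      ∑ j ∈ Finset.range (n + m + 1), ((n + m).choose j : K) * (-1 : K) ^ j * E' j
        = 2 + q⁻¹ * E (n + m) := by
  intro m n hmn
  have hq : q + 1 ≠ 0 := fun h => hq1 (eq_neg_of_add_eq_zero_left h)
  have hq' : q⁻¹ + 1 ≠ 0 := by
    intro h
    apply hq
    field_simp at h
    linear_combination h
  have hA := expGenFun_qEuler hq hE0 hE
  have hB := congrArg (PowerSeries.rescale (-1 : K)) (expGenFun_qEuler hq' hE'0 hE')
  have hexp : PowerSeries.exp K * PowerSeries.rescale (-1 : K) (PowerSeries.exp K) = 1 :=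
    PowerSeries.exp_mul_exp_neg_eq_one
  have hC : PowerSeries.C q * PowerSeries.C q⁻¹ = 1 := by
    rw [← map_mul, mul_inv_cancel₀ hq0, map_one]
  simp only [map_mul, map_add, map_one, rescale_C_eq, rescale_expGenFun] at hB
  have hne : PowerSeries.C q * PowerSeries.exp K + 1 ≠ 0 := by
    intro h
    apply hq
    simpa using congrArg PowerSeries.constantCoeff h
  have key : PowerSeries.exp K * expGenFun (fun n => (-1) ^ n * E' n) =
      PowerSeries.C 2 * PowerSeries.exp K + PowerSeries.C q⁻¹ * expGenFun E
        - PowerSeries.C (2 * q⁻¹) := by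
    apply mul_left_cancel₀ hne
    rw [map_mul]
    generalize PowerSeries.C q = c at *
    generalize PowerSeries.C q⁻¹ = d at *
    generalize PowerSeries.C (2 : K) = t at *
    generalize PowerSeries.exp K = x at *
    generalize PowerSeries.rescale (-1 : K) x = y at *
    generalize expGenFun E = a at *
    generalize expGenFun (fun n => (-1) ^ n * E' n) = b at *
    linear_combination c * x ^ 2 * hB - d * hA - c * d * x * b * hexp + (t * x - x * b) * hC
  have hcoeff := congrArg (PowerSeries.coeff (n + m)) key
  rw [exp_mul_expGenFun] at hcoeff
  have hfac : ((n + m).factorial : K) ≠ 0 := mod_cast (n + m).factorial_ne_zero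
  have hpos : n + m ≠ 0 := by omega
  simp only [map_add, map_sub, PowerSeries.coeff_C_mul, PowerSeries.coeff_exp,
    PowerSeries.coeff_C, if_neg hpos, expGenFun, PowerSeries.coeff_mk, one_div, map_inv₀,
    map_natCast, sub_zero] at hcoeff
  field_simp at hcoeff ⊢
  linear_combination hcoeff
end

section
/- Let s ≥ 1 and let n_1, n_2, …, n_s, k be nonnegative integers with k > 0 and n_1 + n_2 + ⋯ + n_s > s·k, and set N = n_1 + n_2 + ⋯ + n_s. Then ∑_{j=0}^{N - sk} C(N - sk, j) · (-1)^j · E_{j+sk, q^{-1}} = q^{-1} · ∑_{j=0}^{sk} C(sk, j) · (-1)^{sk+j} · E_{N-j, q}. (Corollary 9 of the paper, k > 0 case, obtained by comparing two p-adic integral evaluations of the product of Bernstein polynomials ∏_{i=1}^{s} B_{k,n_i}(x) weighted by q^{-x}.) -/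
open Polynomial in
/-- The linear functional on polynomials with prescribed moments. -/
lemma exists_linearMap_X_pow_eq {K : Type*} [Field K] (a : ℕ → K) :
    ∃ L : K[X] →ₗ[K] K, ∀ n, L (X ^ n) = a n :=
  ⟨(basisMonomials K).constr K a, fun n => by
    simpa [X_pow_eq_monomial] using (basisMonomials K).constr_basis K a n⟩

open Polynomial in
/-- The umbral recurrence as a functional equation. -/
lemma qEuler_functional_equation {K : Type*} [Field K] {q : K} (hq1 : q ≠ -1) {E : ℕ → K}
    (hE0 : E 0 = 2 / (q + 1))
    (hE : ∀ n : ℕ, 1 ≤ n →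
      q * ∑ l ∈ Finset.range (n + 1), (n.choose l : K) * E l + E n = 0)
    {L : K[X] →ₗ[K] K} (hL : ∀ n, L (X ^ n) = E n) (f : K[X]) :
    q * L (f.comp (X + 1)) + L f = 2 * f.eval 0 := by
  induction f using Polynomial.induction_on' with
  | add f g hf hg =>
    simp only [add_comp, map_add, eval_add]
    linear_combination hf + hg
  | monomial n a =>
    have hpow : L ((X + 1) ^ n) = ∑ l ∈ Finset.range (n + 1), (n.choose l : K) * E l := by
      rw [add_pow, map_sum]
      refine Finset.sum_congr rfl fun l _ => ?_
      rw [one_pow, mul_one, mul_comm, ← C_eq_natCast, ← smul_eq_C_mul, map_smul, hL,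
        smul_eq_mul]
    rw [← C_mul_X_pow_eq_monomial, mul_comp, C_comp, X_pow_comp, ← smul_eq_C_mul,
      ← smul_eq_C_mul, map_smul, map_smul, hpow, hL, eval_smul, eval_pow, eval_X]
    simp only [smul_eq_mul]
    rcases Nat.eq_zero_or_pos n with rfl | hn
    · have : q + 1 ≠ 0 := fun h => hq1 (eq_neg_of_add_eq_zero_left h)
      simp [hE0]
      field_simp
    · rw [zero_pow hn.ne']
      linear_combination a * hE n hn

open Polynomial in
/-- A functional that the shift scales by `-q⁻¹` vanishes when `q ≠ -1`. -/
lemma linearMap_eq_zero_of_shift {K : Type*} [Field K] {q : K} (hq1 : q ≠ -1)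
    {D : K[X] →ₗ[K] K} (hD : ∀ f : K[X], q * D (f.comp (X + 1)) + D f = 0) : D = 0 := by
  have hq : q + 1 ≠ 0 := fun h => hq1 (eq_neg_of_add_eq_zero_left h)
  have hpow : ∀ n, D (X ^ n) = 0 := by
    intro n
    induction n using Nat.strong_induction_on with
    | _ n ih =>
      have h := hD (X ^ n)
      have hlow : D ((X + 1) ^ n) = D (X ^ n) := by
        rw [add_pow, map_sum, Finset.sum_range_succ, Finset.sum_eq_zero]
        · simp
        · intro l hl
          rw [one_pow, mul_one, mul_comm, ← C_eq_natCast, ← smul_eq_C_mul, map_smul,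
            ih l (Finset.mem_range.mp hl), smul_zero]
      rw [X_pow_comp, hlow] at h
      exact (mul_eq_zero.mp (by linear_combination h : (q + 1) * D (X ^ n) = 0)).resolve_left hq
  refine (basisMonomials K).ext fun n => ?_
  simpa [X_pow_eq_monomial] using hpow n

open Polynomial in
/-- The reflection `x ↦ 1 - x` exchanges the functionals for `q` and `q⁻¹`, up to boundary
terms. -/
lemma qEuler_reflection_s9 {K : Type*} [Field K] {q : K} (hq0 : q ≠ 0) (hq1 : q ≠ -1)
    {L L' : K[X] →ₗ[K] K}
    (hL : ∀ f : K[X], q * L (f.comp (X + 1)) + L f = 2 * f.eval 0)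
    (hL' : ∀ f : K[X], q⁻¹ * L' (f.comp (X + 1)) + L' f = 2 * f.eval 0) (f : K[X]) :
    L' (f.comp (1 - X)) = q⁻¹ * L f + 2 * f.eval 1 - 2 * q⁻¹ * f.eval 0 := by
  let D : K[X] →ₗ[K] K := L' ∘ₗ (aeval (1 - X : K[X])).toLinearMap
    - q⁻¹ • L - (2 : K) • leval 1 + (2 * q⁻¹) • leval 0
  have hD (g : K[X]) :
      D g = L' (g.comp (1 - X)) - q⁻¹ * L g - 2 * g.eval 1 + 2 * q⁻¹ * g.eval 0 := by
    simp [D, leval_apply, comp, aeval_def]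
  have hzero : D = 0 := by
    refine linearMap_eq_zero_of_shift hq1 fun g => ?_
    have h := hL g
    have h' := hL' (g.comp (2 - X))
    have hshift : (g.comp (2 - X)).comp (X + 1) = g.comp (1 - X) := by
      rw [comp_assoc]
      congr 1
      simp only [sub_comp, X_comp, ofNat_comp]
      ring
    have hshift' : (g.comp (X + 1)).comp (1 - X) = g.comp (2 - X) := by
      rw [comp_assoc]
      congr 1
      simp only [add_comp, X_comp, one_comp]
      ring
    have heval : (g.comp (2 - X)).eval 0 = g.eval 2 := by simp [eval_comp]
    rw [hshift, heval] at h'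
    rw [hD, hD, hshift']
    simp only [eval_comp, eval_add, eval_X, eval_one, zero_add, one_add_one_eq_two]
    linear_combination q * h' - q⁻¹ * h
      + (2 * g.eval 1 - L' (g.comp (1 - X))) * mul_inv_cancel₀ hq0
  have h := hD f
  rw [hzero, LinearMap.zero_apply] at h
  linear_combination -h

open Polynomial in
/-- Moment expansion of a functional on `x ^ m * (1 - x) ^ n`. -/
lemma map_X_pow_mul_one_sub_X_pow {K : Type*} [Field K] {a : ℕ → K} (L : K[X] →ₗ[K] K)
    (hL : ∀ n, L (X ^ n) = a n) (m n : ℕ) :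
    L (X ^ m * (1 - X) ^ n)
      = ∑ j ∈ Finset.range (n + 1), (n.choose j : K) * (-1 : K) ^ j * a (j + m) := by
  rw [sub_eq_neg_add, add_pow, Finset.mul_sum, map_sum]
  refine Finset.sum_congr rfl fun j _ => ?_
  rw [← hL, ← smul_eq_mul (_ * _) (L _), ← map_smul, smul_eq_C_mul]
  congr 1
  simp only [C_mul, C_pow, C_neg, C_1, C_eq_natCast, one_pow, mul_one]
  rw [neg_pow]
  ring

open Polynomial in
/-- Corollary 9 (k > 0 case): for `s ≥ 1`, nonnegative `n_1, …, n_s`, `k > 0` with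
`N = n_1 + ⋯ + n_s > s·k`,
`∑_{j=0}^{N-sk} C(N-sk,j)·(-1)^j·E_{j+sk,q⁻¹}
  = q⁻¹·∑_{j=0}^{sk} C(sk,j)·(-1)^{sk+j}·E_{N-j,q}`.
`E : ℕ → K` are the q-Euler numbers for `q`, `E' : ℕ → K` those for `q⁻¹`. -/
theorem qEuler_bernstein_multiproduct_kpos {K : Type*} [Field K] [CharZero K]
    (q : K) (hq0 : q ≠ 0) (hq1 : q ≠ -1)
    (E E' : ℕ → K)
    (hE0 : E 0 = 2 / (q + 1))
    (hE : ∀ n : ℕ, 1 ≤ n →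
      q * ∑ l ∈ Finset.range (n + 1), (n.choose l : K) * E l + E n = 0)
    (hE'0 : E' 0 = 2 / (q⁻¹ + 1))
    (hE' : ∀ n : ℕ, 1 ≤ n →
      q⁻¹ * ∑ l ∈ Finset.range (n + 1), (n.choose l : K) * E' l + E' n = 0) :
    ∀ (s : ℕ), 1 ≤ s → ∀ (n : Fin s → ℕ) (k : ℕ), 0 < k →
      s * k < ∑ i, n i →
      ∑ j ∈ Finset.range ((∑ i, n i) - s * k + 1),
          (((∑ i, n i) - s * k).choose j : K) * (-1 : K) ^ j * E' (j + s * k)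
        = q⁻¹ * ∑ j ∈ Finset.range (s * k + 1),
            ((s * k).choose j : K) * (-1 : K) ^ (s * k + j) * E ((∑ i, n i) - j) := by
  intro s hs n k hk hlt
  obtain ⟨L, hL⟩ := exists_linearMap_X_pow_eq E
  obtain ⟨L', hL'⟩ := exists_linearMap_X_pow_eq E'
  have hq1' : q⁻¹ ≠ -1 := fun h => hq1 (by rw [← inv_inv q, h, inv_neg, inv_one])
  have href := qEuler_reflection_s9 hq0 hq1 (qEuler_functional_equation hq1 hE0 hE hL)
    (qEuler_functional_equation hq1' hE'0 hE' hL')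
  have hm : 0 < s * k := Nat.mul_pos hs hk
  generalize s * k = m at hm hlt ⊢
  generalize ∑ i, n i = N at hlt ⊢
  obtain ⟨M, rfl⟩ := Nat.exists_eq_add_of_lt hlt
  rw [show m + M + 1 - m = M + 1 by omega]
  have h := href (X ^ (M + 1) * (1 - X) ^ m)
  have hcomp : (X ^ (M + 1) * (1 - X) ^ m : K[X]).comp (1 - X)
      = X ^ m * (1 - X) ^ (M + 1) := by
    simp [mul_comp, mul_comm]
  rw [hcomp, map_X_pow_mul_one_sub_X_pow L' hL', map_X_pow_mul_one_sub_X_pow L hL] at h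
  simp only [eval_mul, eval_pow, eval_sub, eval_X, eval_one, sub_self, zero_pow hm.ne',
    zero_pow M.succ_ne_zero, mul_zero, zero_mul, sub_zero, add_zero] at h
  rw [h, ← Finset.sum_range_reflect]
  congr 1
  refine Finset.sum_congr rfl fun j hj => ?_
  have hj : j ≤ m := Nat.lt_succ_iff.mp (Finset.mem_range.mp hj)
  rw [show m + 1 - 1 - j = m - j by omega, Nat.choose_symm hj,
    show m - j + (M + 1) = m + M + 1 - j by omega]
  congr 2
  obtain ⟨i, rfl⟩ := Nat.exists_eq_add_of_le hj
  rw [Nat.add_sub_cancel_left, show j + i + j = 2 * j + i by ring, pow_add, pow_mul]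
  simp
end
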